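/- Fix h > 0. For all integers j, k ≥ 0: ∫_{ℝ²} W_{h,ℝ}(ψ_j,ψ_k)(x,ξ) dμ_{ℝ²,h/2}(x,ξ) = δ_{jk}. -/

import Mathlib

open Real MeasureTheory

/-- Hermite functions: `psi h j x = ((−1)^j/√(j!))·(h/2)^{j/2}·e^{x²/h}·(d/dx)^j(e^{−x²/h})(x)`. -/
noncomputable def psi (h : ℝ) (j : ℕ) (x : ℝ) : ℝ :=
  ((-1 : ℝ) ^ j / Real.sqrt (Nat.factorial j)) * (h / 2) ^ ((j : ℝ) / 2) *
    Real.exp (x ^ 2 / h) * iteratedDeriv j (fun t => Real.exp (-t ^ 2 / h)) x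

/-- The one-dimensional Gaussian Wigner function `W_{h,ℝ}(f,g)`. -/
noncomputable def wigner1 (h : ℝ) (f g : ℝ → ℂ) (z ζ : ℝ) : ℂ :=
  (Real.exp (ζ ^ 2 / h) : ℂ) *
    ∫ t : ℝ, Complex.exp (-2 * Complex.I * (ζ : ℂ) * (t : ℂ) / (h : ℂ)) * f (z + t) *
      (starRingEnd ℂ) (g (z - t)) * (Real.exp (-t ^ 2 / h) : ℂ) *
        (((π * h) ^ (-(1 : ℝ) / 2) : ℝ) : ℂ)

/-- The Gaussian measure `μ_{ℝ²,s}` of variance `s` on `ℝ²`. -/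
noncomputable def gaussMeasure2 (s : ℝ) : Measure (ℝ × ℝ) :=
  volume.withDensity fun p =>
    ENNReal.ofReal ((2 * π * s)⁻¹ * Real.exp (-(p.1 ^ 2 + p.2 ^ 2) / (2 * s)))


open Polynomial in
/-- The polynomials with `(d/dx)^n e^{-x²/h} = P_n(x) e^{-x²/h}`. -/
noncomputable def hermP (h : ℝ) : ℕ → ℝ[X]
  | 0 => 1
  | n + 1 => derivative (hermP h n) - C (2 / h) * X * hermP h n

lemma integrable_pow_gauss {a : ℝ} (ha : 0 < a) (n : ℕ) :
    Integrable fun x : ℝ => x ^ n * Real.exp (-a * x ^ 2) := by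
  have := integrable_rpow_mul_exp_neg_mul_sq ha (s := n) (by
    have : (0 : ℝ) ≤ n := n.cast_nonneg
    linarith)
  simpa using this

open Polynomial in
lemma integrable_cpoly_gauss {a : ℝ} (ha : 0 < a) (Q : ℂ[X]) :
    Integrable fun x : ℝ => Q.eval (x : ℂ) * ((Real.exp (-a * x ^ 2) : ℝ) : ℂ) := by
  induction Q using Polynomial.induction_on' with
  | add p q hp hq => simpa only [Polynomial.eval_add, add_mul] using! hp.add hq
  | monomial n c =>
    have := ((integrable_pow_gauss ha n).ofReal (𝕜 := ℂ)).const_mul c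
    refine this.congr (Filter.Eventually.of_forall fun x => ?_)
    simp [mul_assoc]

open Polynomial in
lemma integrable_poly_gauss {a : ℝ} (ha : 0 < a) (Q : ℝ[X]) :
    Integrable fun x : ℝ => Q.eval x * Real.exp (-a * x ^ 2) := by
  induction Q using Polynomial.induction_on' with
  | add p q hp hq => simpa only [Polynomial.eval_add, add_mul] using! hp.add hq
  | monomial n c =>
    have := (integrable_pow_gauss ha n).const_mul c
    refine this.congr (Filter.Eventually.of_forall fun x => ?_)
    simp [mul_assoc]

lemma gauss_congr (h x : ℝ) : Real.exp (-x ^ 2 / h) = Real.exp (-(1 / h) * x ^ 2) := by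
  congr 1; ring

open Polynomial in
lemma integrable_poly_gauss' {h : ℝ} (hh : 0 < h) (Q : ℝ[X]) :
    Integrable fun x : ℝ => Q.eval x * Real.exp (-x ^ 2 / h) := by
  simp_rw [gauss_congr]
  exact integrable_poly_gauss (by positivity) Q

open Polynomial in
lemma hasDerivAt_poly_gauss (h : ℝ) (Q : ℝ[X]) (x : ℝ) :
    HasDerivAt (fun x : ℝ => Q.eval x * Real.exp (-x ^ 2 / h))
      ((derivative Q - C (2 / h) * X * Q).eval x * Real.exp (-x ^ 2 / h)) x := by
  have h1 := Q.hasDerivAt x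
  have h2 : HasDerivAt (fun x : ℝ => Real.exp (-x ^ 2 / h))
      (Real.exp (-x ^ 2 / h) * (-(2 * x) / h)) x := by
    have := (((hasDerivAt_pow 2 x).neg).div_const h).exp
    simpa using this
  refine (h1.fun_mul h2).congr_deriv ?_
  simp
  ring

open Polynomial in
lemma iteratedDeriv_gauss (h : ℝ) (n : ℕ) :
    iteratedDeriv n (fun t : ℝ => Real.exp (-t ^ 2 / h)) =
      fun x => (hermP h n).eval x * Real.exp (-x ^ 2 / h) := by
  induction n with
  | zero => simp [hermP]
  | succ n ih =>
    rw [iteratedDeriv_succ, ih]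
    ext x
    rw [(hasDerivAt_poly_gauss h (hermP h n) x).deriv, hermP]

open Polynomial in
lemma integral_hermP_step {h : ℝ} (hh : 0 < h) (Q R : ℝ[X]) :
    ∫ x : ℝ, (Q * (derivative R - C (2 / h) * X * R)).eval x * Real.exp (-x ^ 2 / h) =
      - ∫ x : ℝ, (derivative Q * R).eval x * Real.exp (-x ^ 2 / h) := by
  have h0 := integral_eq_zero_of_hasDerivAt_of_integrable
    (hasDerivAt_poly_gauss h (Q * R)) (integrable_poly_gauss' hh _) (integrable_poly_gauss' hh _)
  rw [← add_eq_zero_iff_eq_neg, ← integral_add (integrable_poly_gauss' hh _)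
    (integrable_poly_gauss' hh _), ← h0]
  congr 1
  ext x
  simp
  ring

open Polynomial in
lemma integral_mul_hermP {h : ℝ} (hh : 0 < h) (n : ℕ) (Q : ℝ[X]) :
    ∫ x : ℝ, (Q * hermP h n).eval x * Real.exp (-x ^ 2 / h) =
      (-1) ^ n * ∫ x : ℝ, (derivative^[n] Q).eval x * Real.exp (-x ^ 2 / h) := by
  induction n generalizing Q with
  | zero => simp [hermP]
  | succ n ih =>
    rw [hermP, integral_hermP_step hh, ih, Function.iterate_succ_apply]
    ring

open Polynomial in
lemma hermP_deg (h : ℝ) (n : ℕ) :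
    (hermP h n).natDegree ≤ n ∧ (hermP h n).coeff n = (-(2 / h)) ^ n := by
  induction n with
  | zero => simp [hermP]
  | succ n ih =>
    obtain ⟨h1, h2⟩ := ih
    constructor
    · rw [hermP]
      refine (natDegree_sub_le _ _).trans (max_le ?_ ?_)
      · exact (natDegree_derivative_le _).trans (by omega)
      · rw [mul_assoc]
        refine (natDegree_C_mul_le _ _).trans ?_
        refine natDegree_mul_le.trans ?_
        have := natDegree_X_le (R := ℝ)
        omega
    · rw [hermP, coeff_sub, mul_assoc, coeff_C_mul, coeff_X_mul, h2, coeff_derivative,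
        coeff_eq_zero_of_natDegree_lt (by omega)]
      ring

open Polynomial in
lemma iter_deriv_hermP_lt (h : ℝ) {j k : ℕ} (hjk : j < k) :
    derivative^[k] (hermP h j) = 0 :=
  iterate_derivative_eq_zero ((hermP_deg h j).1.trans_lt hjk)

open Polynomial in
lemma iter_deriv_hermP_self (h : ℝ) (j : ℕ) :
    derivative^[j] (hermP h j) = C ((j.factorial : ℝ) * (-(2 / h)) ^ j) := by
  have hd : (derivative^[j] (hermP h j)).natDegree = 0 := by
    have := natDegree_iterate_derivative (hermP h j) j
    have := (hermP_deg h j).1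
    omega
  rw [eq_C_of_natDegree_eq_zero hd, coeff_iterate_derivative]
  simp [(hermP_deg h j).2, Nat.descFactorial_self]

lemma integral_gauss_h {h : ℝ} (hh : 0 < h) :
    ∫ x : ℝ, Real.exp (-x ^ 2 / h) = Real.sqrt (π * h) := by
  simp_rw [gauss_congr, integral_gaussian]
  congr 1
  field_simp

open Polynomial in
lemma integral_hermP_hermP {h : ℝ} (hh : 0 < h) (j k : ℕ) :
    ∫ x : ℝ, (hermP h j * hermP h k).eval x * Real.exp (-x ^ 2 / h) =
      if j = k then (j.factorial : ℝ) * (2 / h) ^ j * Real.sqrt (π * h) else 0 := by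
  rcases lt_trichotomy j k with hjk | rfl | hjk
  · rw [integral_mul_hermP hh, iter_deriv_hermP_lt h hjk, if_neg hjk.ne]
    simp
  · rw [integral_mul_hermP hh, iter_deriv_hermP_self, if_pos rfl]
    simp only [eval_C]
    rw [integral_const_mul, integral_gauss_h hh, neg_pow (2 / h) j]
    have : ((-1 : ℝ) ^ j) * (-1) ^ j = 1 := by rw [← mul_pow]; simp
    linear_combination (j.factorial : ℝ) * (2 / h) ^ j * Real.sqrt (π * h) * this
  · rw [mul_comm (hermP h j), integral_mul_hermP hh, iter_deriv_hermP_lt h hjk, if_neg hjk.ne']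
    simp

/-- normalisation -/
noncomputable def hermC (h : ℝ) (j : ℕ) : ℝ :=
  ((-1 : ℝ) ^ j / Real.sqrt (Nat.factorial j)) * (h / 2) ^ ((j : ℝ) / 2)

open Polynomial in
lemma psi_eq (h : ℝ) (j : ℕ) (x : ℝ) :
    psi h j x = (C (hermC h j) * hermP h j).eval x := by
  rw [psi, iteratedDeriv_gauss]
  have : Real.exp (x ^ 2 / h) * Real.exp (-x ^ 2 / h) = 1 := by
    rw [← Real.exp_add, neg_div, add_neg_cancel, Real.exp_zero]
  simp only [eval_mul, eval_C, hermC]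
  linear_combination ((-1 : ℝ) ^ j / Real.sqrt (Nat.factorial j)) * (h / 2) ^ ((j : ℝ) / 2) *
    (hermP h j).eval x * this

lemma hermC_sq {h : ℝ} (hh : 0 < h) (j : ℕ) :
    hermC h j * hermC h j * ((j.factorial : ℝ) * (2 / h) ^ j) = 1 := by
  have h1 : ((-1 : ℝ) ^ j) * (-1) ^ j = 1 := by rw [← mul_pow]; simp
  have h2 : Real.sqrt (Nat.factorial j) * Real.sqrt (Nat.factorial j) = (Nat.factorial j : ℝ) :=
    Real.mul_self_sqrt (by positivity)
  have h3 : (h / 2) ^ ((j : ℝ) / 2) * (h / 2) ^ ((j : ℝ) / 2) = (h / 2) ^ j := by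
    rw [← Real.rpow_add (by positivity), add_halves, Real.rpow_natCast]
  have h4 : (h / 2) ^ j * (2 / h) ^ j = 1 := by
    rw [← mul_pow, div_mul_div_cancel₀ (by norm_num), div_self hh.ne', one_pow]
  have h5 : (j.factorial : ℝ) ≠ 0 := by positivity
  calc _ = ((-1 : ℝ) ^ j * (-1) ^ j) *
        ((h / 2) ^ ((j : ℝ) / 2) * (h / 2) ^ ((j : ℝ) / 2)) * (2 / h) ^ j * (j.factorial : ℝ) /
        (Real.sqrt (Nat.factorial j) * Real.sqrt (Nat.factorial j)) := by
        rw [hermC]; ring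
    _ = 1 := by rw [h1, h2, h3, one_mul, h4, one_mul, div_self h5]

/-- `t^b e^{-t²/h}` -/
noncomputable def gmono (h : ℝ) (b : ℕ) (t : ℝ) : ℂ := (t : ℂ) ^ b * ((Real.exp (-t ^ 2 / h) : ℝ) : ℂ)

lemma integrable_gmono {h : ℝ} (hh : 0 < h) (b : ℕ) : Integrable (gmono h b) := by
  have := ((integrable_pow_gauss (a := 1 / h) (by positivity) b).ofReal (𝕜 := ℂ))
  refine this.congr (Filter.Eventually.of_forall fun x => ?_)
  simp [gmono, gauss_congr]

lemma continuous_gmono (h : ℝ) (b : ℕ) : Continuous (gmono h b) := by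
  unfold gmono
  fun_prop

open Polynomial FourierTransform in
lemma fourier_gmono {h : ℝ} (hh : 0 < h) (b : ℕ) : ∃ Q : ℂ[X], ∀ w : ℝ,
    𝓕 (gmono h b) w = Q.eval (w : ℂ) * ((Real.exp (-(π ^ 2 * h) * w ^ 2) : ℝ) : ℂ) := by
  induction b with
  | zero =>
    have hb : 0 < (((1 / (π * h) : ℝ)) : ℂ).re := by
      rw [Complex.ofReal_re]; positivity
    have key := fourier_gaussian_pi hb
    refine ⟨C (1 / (((1 / (π * h) : ℝ)) : ℂ) ^ (1 / 2 : ℂ)), fun w => ?_⟩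
    have e : gmono h 0 = fun x : ℝ => Complex.exp (-π * ((1 / (π * h) : ℝ) : ℂ) * x ^ 2) := by
      ext x
      have h1 : (π : ℂ) ≠ 0 := by exact_mod_cast Real.pi_ne_zero
      have h2 : (h : ℂ) ≠ 0 := by exact_mod_cast hh.ne'
      simp only [gmono, pow_zero, one_mul]
      push_cast
      congr 1
      field_simp
    rw [e, key, eval_C]
    congr 1
    push_cast
    congr 1
    have h1 : (π : ℂ) ≠ 0 := by exact_mod_cast Real.pi_ne_zero
    have h2 : (h : ℂ) ≠ 0 := by exact_mod_cast hh.ne'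
    field_simp
  | succ b ih =>
    obtain ⟨Q, hQ⟩ := ih
    have hc : (-2 * π * Complex.I : ℂ) ≠ 0 := by
      simp [Real.pi_ne_zero]
    refine ⟨C ((-2 * π * Complex.I : ℂ)⁻¹) *
      (derivative Q - C (2 * (π ^ 2 * h) : ℂ) * X * Q), fun w => ?_⟩
    have h1 := Real.hasDerivAt_fourier (integrable_gmono hh b) (by
      refine (integrable_gmono hh (b + 1)).congr (Filter.Eventually.of_forall fun x => ?_)
      simp [gmono, pow_succ']; ring) w
    have h2 : HasDerivAt (𝓕 (gmono h b))
        ((derivative Q - C (2 * (π ^ 2 * h) : ℂ) * X * Q).eval (w : ℂ) *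
          ((Real.exp (-(π ^ 2 * h) * w ^ 2) : ℝ) : ℂ)) w := by
      rw [show 𝓕 (gmono h b) = _ from funext hQ]
      have e1 := (Q.hasDerivAt (w : ℂ)).comp_ofReal
      have e2 : HasDerivAt (fun x : ℝ => Real.exp (-(π ^ 2 * h) * x ^ 2))
          (Real.exp (-(π ^ 2 * h) * w ^ 2) * (-(π ^ 2 * h) * (2 * w))) w := by
        have := ((hasDerivAt_pow 2 w).const_mul (-(π ^ 2 * h))).exp
        simpa using this
      refine (e1.fun_mul e2.ofReal_comp).congr_deriv ?_
      simp
      ring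
    have h3 := h1.unique h2
    have h4 : 𝓕 (fun x : ℝ ↦ (-2 * π * Complex.I * x : ℂ) • gmono h b x) w =
        (-2 * π * Complex.I : ℂ) * 𝓕 (gmono h (b + 1)) w := by
      rw [Real.fourier_real_eq_integral_exp_smul, Real.fourier_real_eq_integral_exp_smul,
        ← integral_const_mul]
      congr 1
      ext x
      simp only [gmono, smul_eq_mul]
      ring
    rw [h4] at h3
    rw [eval_mul, mul_assoc, ← h3, eval_C, inv_mul_cancel_left₀ hc]

open FourierTransform in
lemma integrable_fourier_gmono {h : ℝ} (hh : 0 < h) (b : ℕ) : Integrable (𝓕 (gmono h b)) := by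
  obtain ⟨Q, hQ⟩ := fourier_gmono hh b
  rw [show 𝓕 (gmono h b) = _ from funext hQ]
  exact integrable_cpoly_gauss (by positivity) Q

open FourierTransform in
lemma integral_fourier_gmono {h : ℝ} (hh : 0 < h) (b : ℕ) :
    ∫ w : ℝ, 𝓕 (gmono h b) w = (0 : ℂ) ^ b := by
  have := congrFun ((continuous_gmono h b).fourierInv_fourier_eq (integrable_gmono hh b)
    (integrable_fourier_gmono hh b)) 0
  rw [Real.fourierInv_eq'] at this
  simpa [gmono] using this

/-- the `ξ`-factor -/
noncomputable def JJ (h : ℝ) (b : ℕ) (ξ : ℝ) : ℂ :=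
  ∫ t : ℝ, Complex.exp (-2 * Complex.I * (ξ : ℂ) * (t : ℂ) / (h : ℂ)) * gmono h b t

open FourierTransform in
lemma JJ_eq {h : ℝ} (hh : 0 < h) (b : ℕ) : JJ h b = fun ξ => 𝓕 (gmono h b) (ξ / (π * h)) := by
  ext ξ
  rw [Real.fourier_real_eq_integral_exp_smul, JJ]
  congr 1
  ext t
  rw [smul_eq_mul]
  congr 2
  have h1 : (π : ℂ) ≠ 0 := by exact_mod_cast Real.pi_ne_zero
  have h2 : (h : ℂ) ≠ 0 := by exact_mod_cast hh.ne'
  push_cast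
  field_simp

lemma integrable_JJ {h : ℝ} (hh : 0 < h) (b : ℕ) : Integrable (JJ h b) := by
  rw [JJ_eq hh]
  exact (integrable_fourier_gmono hh b).comp_div (by positivity)

lemma integral_JJ {h : ℝ} (hh : 0 < h) (b : ℕ) :
    ∫ ξ : ℝ, JJ h b ξ = (π * h : ℝ) * (0 : ℂ) ^ b := by
  rw [JJ_eq hh, Measure.integral_comp_div, integral_fourier_gmono hh,
    abs_of_pos (by positivity)]
  simp

lemma integrable_JJ_integrand {h : ℝ} (hh : 0 < h) (b : ℕ) (ξ : ℝ) :
    Integrable fun t : ℝ =>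
      Complex.exp (-2 * Complex.I * (ξ : ℂ) * (t : ℂ) / (h : ℂ)) * gmono h b t := by
  refine (integrable_gmono hh b).bdd_mul (c := 1) (by fun_prop)
    (Filter.Eventually.of_forall fun t => ?_)
  rw [show (-2 * Complex.I * (ξ : ℂ) * (t : ℂ) / (h : ℂ)) =
    ((-2 * ξ * t / h : ℝ) : ℂ) * Complex.I by push_cast; ring, Complex.norm_exp_ofReal_mul_I]

open Polynomial in
lemma bivar (p q : ℝ[X]) : ∃ (N : ℕ) (r : ℕ → ℝ[X]), ∀ x t : ℝ,
    p.eval (x + t) * q.eval (x - t) = ∑ b ∈ Finset.range (N + 1), (r b).eval x * t ^ b := by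
  let R : ℝ[X][X] := (p.map C).comp (C X + X) * (q.map C).comp (C X - X)
  refine ⟨R.natDegree, R.coeff, fun x t => ?_⟩
  have h1 : R.evalEval x t = p.eval (x + t) * q.eval (x - t) := by
    have aux : ∀ (p : ℝ[X]) (s : ℝ[X]), ((p.map C).eval s).eval x = p.eval (s.eval x) := by
      intro p s
      rw [eval_map]
      change evalRingHom x (eval₂ C s p) = _
      rw [hom_eval₂]
      have : (evalRingHom x).comp C = RingHom.id ℝ := by ext; simp
      rw [this]
      rfl
    simp [R, evalEval, aux]
  rw [← h1, evalEval, eval_eq_sum_range (p := R), eval_finsetSum]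
  simp

open Polynomial in
lemma wigner_poly {h : ℝ} (hh : 0 < h) (p q : ℝ[X]) :
    ∫ z : ℝ × ℝ, wigner1 h (fun t => ((p.eval t : ℝ) : ℂ)) (fun t => ((q.eval t : ℝ) : ℂ)) z.1 z.2
      ∂ gaussMeasure2 (h / 2) =
    (((π * h) ^ (-(1 : ℝ) / 2) * ∫ x : ℝ, (p * q).eval x * Real.exp (-x ^ 2 / h) : ℝ) : ℂ) := by
  obtain ⟨N, r, hr⟩ := bivar p q
  set c : ℝ := (π * h) ^ (-(1 : ℝ) / 2) with hc
  have hW : ∀ x ξ : ℝ, wigner1 h (fun t => ((p.eval t : ℝ) : ℂ)) (fun t => ((q.eval t : ℝ) : ℂ)) x ξ =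
      ∑ b ∈ Finset.range (N + 1),
        (Real.exp (ξ ^ 2 / h) : ℂ) * (c * (((r b).eval x : ℝ) : ℂ) * JJ h b ξ) := by
    intro x ξ
    rw [wigner1, ← Finset.mul_sum]
    congr 1
    simp_rw [JJ, ← integral_const_mul]
    rw [← integral_finsetSum _ fun b _ => (integrable_JJ_integrand hh b ξ).const_mul _]
    congr 1
    ext t
    have h1 : ((p.eval (x + t) : ℝ) : ℂ) * ((q.eval (x - t) : ℝ) : ℂ) =
        ∑ b ∈ Finset.range (N + 1), (((r b).eval x : ℝ) : ℂ) * (t : ℂ) ^ b := by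
      have := congrArg (fun a : ℝ => (a : ℂ)) (hr x t)
      push_cast at this
      exact this
    rw [Complex.conj_ofReal]
    calc _ = Complex.exp (-2 * Complex.I * (ξ : ℂ) * (t : ℂ) / (h : ℂ)) *
          (((p.eval (x + t) : ℝ) : ℂ) * ((q.eval (x - t) : ℝ) : ℂ)) *
          (Real.exp (-t ^ 2 / h) : ℂ) * (c : ℂ) := by ring
      _ = _ := by
        rw [h1, Finset.mul_sum, Finset.sum_mul, Finset.sum_mul]
        refine Finset.sum_congr rfl fun b _ => ?_
        rw [gmono]
        ring
  rw [gaussMeasure2, integral_withDensity_eq_integral_toReal_smul (by fun_prop)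
    (Filter.Eventually.of_forall fun _ => ENNReal.ofReal_lt_top)]
  have hI : ∀ z : ℝ × ℝ, (ENNReal.ofReal ((2 * π * (h / 2))⁻¹ *
      Real.exp (-(z.1 ^ 2 + z.2 ^ 2) / (2 * (h / 2))))).toReal •
      wigner1 h (fun t => ((p.eval t : ℝ) : ℂ)) (fun t => ((q.eval t : ℝ) : ℂ)) z.1 z.2 =
      ∑ b ∈ Finset.range (N + 1), ((((π * h)⁻¹ * c * ((r b).eval z.1 * Real.exp (-z.1 ^ 2 / h)) : ℝ)
        : ℂ)) * JJ h b z.2 := by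
    rintro ⟨x, ξ⟩
    rw [ENNReal.toReal_ofReal (by positivity), hW, Finset.smul_sum]
    refine Finset.sum_congr rfl fun b _ => ?_
    simp only [Complex.real_smul]
    have e1 : (2 * π * (h / 2))⁻¹ = (π * h)⁻¹ := by congr 1; ring
    have e2 : Real.exp (-(x ^ 2 + ξ ^ 2) / (2 * (h / 2))) * Real.exp (ξ ^ 2 / h) =
        Real.exp (-x ^ 2 / h) := by
      rw [← Real.exp_add]; congr 1; field_simp; ring
    rw [e1, ← e2]
    simp only [Complex.ofReal_mul]
    ring
  simp_rw [hI]
  have hint : ∀ b, Integrable fun x : ℝ =>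
      ((((π * h)⁻¹ * c * ((r b).eval x * Real.exp (-x ^ 2 / h)) : ℝ) : ℂ)) := fun b =>
    (((integrable_poly_gauss' hh (r b)).const_mul _).ofReal)
  rw [integral_finsetSum _ fun b _ => by
    rw [Measure.volume_eq_prod]
    exact (hint b).mul_prod (integrable_JJ hh b)]
  have hb : ∀ b, ∫ z : ℝ × ℝ, ((((π * h)⁻¹ * c * ((r b).eval z.1 * Real.exp (-z.1 ^ 2 / h)) : ℝ)
        : ℂ)) * JJ h b z.2 =
      ((c * ∫ x : ℝ, (r b).eval x * Real.exp (-x ^ 2 / h) : ℝ) : ℂ) * (0 : ℂ) ^ b := by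
    intro b
    rw [Measure.volume_eq_prod, integral_prod_mul (fun x : ℝ =>
      ((((π * h)⁻¹ * c * ((r b).eval x * Real.exp (-x ^ 2 / h)) : ℝ) : ℂ))) (JJ h b),
      integral_JJ hh, integral_complex_ofReal, integral_const_mul, ← mul_assoc, ← Complex.ofReal_mul]
    congr 2
    have : π * h ≠ 0 := by positivity
    field_simp
  simp_rw [hb]
  rw [Finset.sum_range_succ', Finset.sum_eq_zero (fun b _ => by simp), zero_add, pow_zero, mul_one]
  congr 3
  ext x
  have := hr x 0
  rw [Finset.sum_range_succ', Finset.sum_eq_zero (fun b _ => by simp)] at this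
  simp at this
  rw [eval_mul, this]

/-- `∫_{ℝ²} W_{h,ℝ}(ψ_j,ψ_k) dμ_{ℝ²,h/2} = δ_{jk}`. -/
theorem integral_wigner_hermite (h : ℝ) (hh : 0 < h) (j k : ℕ) :
    ∫ p : ℝ × ℝ, wigner1 h (fun t => (psi h j t : ℂ)) (fun t => (psi h k t : ℂ)) p.1 p.2
        ∂ gaussMeasure2 (h / 2) = if j = k then 1 else 0 := by
  simp_rw [psi_eq]
  rw [wigner_poly hh]
  have e : ∫ x : ℝ, (Polynomial.C (hermC h j) * hermP h j *
      (Polynomial.C (hermC h k) * hermP h k)).eval x * Real.exp (-x ^ 2 / h) =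
      hermC h j * hermC h k *
        ∫ x : ℝ, (hermP h j * hermP h k).eval x * Real.exp (-x ^ 2 / h) := by
    rw [← integral_const_mul]
    congr 1
    ext x
    simp only [Polynomial.eval_mul, Polynomial.eval_C]
    ring
  rw [e, integral_hermP_hermP hh]
  split_ifs with hjk
  · subst hjk
    have h1 : (π * h) ^ (-(1 : ℝ) / 2) * Real.sqrt (π * h) = 1 := by
      rw [Real.sqrt_eq_rpow, ← Real.rpow_add (by positivity)]
      norm_num
    have h2 := hermC_sq hh j
    have h3 : (π * h) ^ (-(1 : ℝ) / 2) * (hermC h j * hermC h j *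
        ((j.factorial : ℝ) * (2 / h) ^ j * Real.sqrt (π * h))) = 1 := by
      linear_combination h2 + (hermC h j * hermC h j * ((j.factorial : ℝ) * (2 / h) ^ j)) * h1
    rw [h3]
    simp
  · simp
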